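/- Fix r_1 < ... < r_k with d = gcd(r_1,...,r_k). For all n > r_k² such that M_n and M_{n+r_k} are primitive, the catenary degree satisfies c(M_{n+r_k}) = c(M_n) + d. -/

import Mathlib

open Finset

/-- Length of a factorization. -/
def vlen {m : ℕ} (z : Fin m → ℕ) : ℕ := ∑ i, z i

/-- Factorization homomorphism of `M_n = ⟨n, n+r_1, ..., n+r_k⟩`. -/
def piM (k n : ℕ) (r : Fin (k + 1) → ℕ) (z : Fin (k + 2) → ℕ) : ℕ :=
  z 0 * n + ∑ i : Fin (k + 1), z i.succ * (n + r i)

/-- Two factorizations of `β` lie in the same connected component of the factorization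
graph `∇_β`: there is a path of factorizations of `β`, consecutive ones sharing a
common positive coordinate. -/
def SameComp {m : ℕ} (π : (Fin m → ℕ) → ℕ) (β : ℕ) :
    (Fin m → ℕ) → (Fin m → ℕ) → Prop :=
  Relation.ReflTransGen (fun a b => π a = β ∧ π b = β ∧ ∃ i, 0 < a i ∧ 0 < b i)

/-- `β` is a Betti element: its factorization graph is disconnected. -/
def IsBetti {m : ℕ} (π : (Fin m → ℕ) → ℕ) (β : ℕ) : Prop :=
  ∃ z z', π z = β ∧ π z' = β ∧ ¬ SameComp π β z z'

/-- The map `Φ_n` on pairs of factorizations. -/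
def Phi (k : ℕ) (p : (Fin (k + 2) → ℕ) × (Fin (k + 2) → ℕ)) :
    (Fin (k + 2) → ℕ) × (Fin (k + 2) → ℕ) :=
  if vlen p.2 < vlen p.1 then
    (p.1 + (vlen p.1 - vlen p.2) • Pi.single (0 : Fin (k + 2)) 1,
     p.2 + (vlen p.1 - vlen p.2) • Pi.single (Fin.last (k + 1)) 1)
  else if vlen p.1 < vlen p.2 then
    (p.1 + (vlen p.2 - vlen p.1) • Pi.single (Fin.last (k + 1)) 1,
     p.2 + (vlen p.2 - vlen p.1) • Pi.single (0 : Fin (k + 2)) 1)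
  else p

/-- The congruence generated by a set of relations `ρ`. -/
inductive CongGen {m : ℕ} (ρ : Set ((Fin m → ℕ) × (Fin m → ℕ))) :
    (Fin m → ℕ) → (Fin m → ℕ) → Prop
  | of {z z'} : (z, z') ∈ ρ → CongGen ρ z z'
  | refl (z) : CongGen ρ z z
  | symm {z z'} : CongGen ρ z z' → CongGen ρ z' z
  | trans {x y z} : CongGen ρ x y → CongGen ρ y z → CongGen ρ x z
  | add {z z'} (u) : CongGen ρ z z' → CongGen ρ (z + u) (z' + u)

/-- `ρ` is a presentation for the monoid with factorization homomorphism `π`. -/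
def IsPres {m : ℕ} (π : (Fin m → ℕ) → ℕ)
    (ρ : Set ((Fin m → ℕ) × (Fin m → ℕ))) : Prop :=
  (∀ p ∈ ρ, π p.1 = π p.2) ∧ ∀ z z', CongGen ρ z z' ↔ π z = π z'

/-- `ρ` is a minimal presentation. -/
def IsMinPres {m : ℕ} (π : (Fin m → ℕ) → ℕ)
    (ρ : Set ((Fin m → ℕ) × (Fin m → ℕ))) : Prop :=
  IsPres π ρ ∧ ∀ ρ' ⊆ ρ, IsPres π ρ' → ρ' = ρ

/-- Primitivity of `M_n`: the gcd of the generators is 1. -/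
def Primitive (k n : ℕ) (r : Fin (k + 1) → ℕ) : Prop :=
  Nat.gcd n (Finset.univ.gcd fun i : Fin (k + 1) => n + r i) = 1

/-- Distance between two factorizations. -/
def fdist {m : ℕ} (z z' : Fin m → ℕ) : ℕ :=
  max (∑ i, (z i - min (z i) (z' i))) (∑ i, (z' i - min (z i) (z' i)))

/-- `N` admits `N`-chains between all pairs of factorizations of every element of
`M_n`. The catenary degree of `M_n` is the least such `N`. -/
def catSet (k n : ℕ) (r : Fin (k + 1) → ℕ) : Set ℕ :=
  {N | ∀ z z' : Fin (k + 2) → ℕ, piM k n r z = piM k n r z' →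
    ∃ (L : ℕ) (a : Fin (L + 1) → Fin (k + 2) → ℕ),
      a 0 = z ∧ a (Fin.last L) = z' ∧
      (∀ i, piM k n r (a i) = piM k n r z) ∧
      ∀ i : Fin L, fdist (a i.castSucc) (a i.succ) ≤ N}

/-
Call a relation between factorizations homogeneous if both sides have the same length. By a
zero-sum argument a homogeneous relation splits as soon as its sides are longer than `r_k + 1`, so
factorizations of equal length are joined by chains of small steps. The lengths of two
factorizations of an element differ by a multiple of `d`. If they differ by more than `d`, then,
as `n > r_k²`, some factorization of intermediate length shares, up to homogeneous relations, the
generator `n` with the longer one and `n + r_k` with the shorter one; removing the shared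
generators, one proceeds by induction. If they differ by exactly `d`, the two factorizations
themselves share one of these generators, unless the longer is made up almost only of `n` and the
shorter almost only of `n + r_k`. Hence these extreme pairs decide the catenary degree of `M_n`.
Up to homogeneous relations, adding `d` copies of the smallest generator to the longer member and
`d` copies of the largest one to the shorter turns the extreme pairs for `M_n` into those for
`M_{n + r_k}`, and it raises the distance between the two classes by exactly `d`.
-/

section RelSeries

variable {α : Type*} {r : SetRel α α} {x y : α}

theorem exists_relSeries_of_reflTransGen (h : Relation.ReflTransGen (fun a b => (a, b) ∈ r) x y) :
    ∃ p : RelSeries r, p.head = x ∧ p.last = y := by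
  induction h with
  | refl => exact ⟨RelSeries.singleton r x, rfl, rfl⟩
  | tail _ hstep ih =>
    obtain ⟨p, rfl, rfl⟩ := ih
    exact ⟨p.snoc _ hstep, p.head_snoc _ hstep, p.last_snoc _ hstep⟩

theorem reflTransGen_relSeries (p : RelSeries r) (i : Fin (p.length + 1)) :
    Relation.ReflTransGen (fun a b => (a, b) ∈ r) p.head (p i) := by
  induction i using Fin.induction with
  | zero => exact .refl
  | succ i ih => exact ih.tail (p.step i)

end RelSeries

section ZeroSum

variable {ι G : Type*} [Fintype ι]

theorem exists_monotone_chain_of_forall_insert [DecidableEq ι] {p : Finset ι → Prop} (h0 : p ∅)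
    (hins : ∀ I ≠ univ, p I → ∃ x ∉ I, p (insert x I)) :
    ∃ c : ℕ → Finset ι, Monotone c ∧ ∀ j ≤ Fintype.card ι, #(c j) = j ∧ p (c j) := by
  have step (I : Finset ι) (hI : p I) : ∃ J, I ⊆ J ∧ p J ∧ (I ≠ univ → #J = #I + 1) := by
    by_cases hu : I = univ
    · exact ⟨I, Subset.rfl, hI, fun h => absurd hu h⟩
    · obtain ⟨x, hx, hpx⟩ := hins I hu hI
      exact ⟨insert x I, subset_insert x I, hpx, fun _ => card_insert_of_notMem hx⟩
  choose! next hsub hp hcard using step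
  have hpc (j : ℕ) : p (next^[j] ∅) := by
    induction j with
    | zero => exact h0
    | succ j ih => rw [Function.iterate_succ_apply']; exact hp _ ih
  have hcardc (j : ℕ) (hj : j ≤ Fintype.card ι) : #(next^[j] ∅) = j := by
    induction j with
    | zero => rfl
    | succ j ih =>
      have hne : next^[j] ∅ ≠ univ := fun h => by
        have := ih (by omega)
        rw [h, card_univ] at this
        omega
      rw [Function.iterate_succ_apply', hcard _ (hpc j) hne, ih (by omega)]
  refine ⟨fun j => next^[j] ∅, monotone_nat_of_le_succ fun j => ?_,
    fun j hj => ⟨hcardc j hj, hpc j⟩⟩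
  rw [Function.iterate_succ_apply']
  exact hsub _ (hpc j)

variable [AddCommGroup G] {f : ι → G}

/- Grow `∅` one index at a time so that the partial sums stay in `W`; two of the first `#W + 1`
partial sums agree. -/
theorem exists_nonempty_sum_eq_zero_of_forall_extend {W : Finset G} (h0 : 0 ∈ W)
    (hext : ∀ I ≠ univ, ∑ i ∈ I, f i ∈ W → ∃ x ∉ I, f x + ∑ i ∈ I, f i ∈ W)
    (hW : #W ≤ Fintype.card ι) :
    ∃ I : Finset ι, I.Nonempty ∧ #I ≤ #W ∧ ∑ i ∈ I, f i = 0 := by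
  classical
  obtain ⟨c, hmono, hc⟩ := exists_monotone_chain_of_forall_insert
    (p := fun I => ∑ i ∈ I, f i ∈ W) (by simpa using h0) fun I hI hIW => by
      obtain ⟨x, hx, hxW⟩ := hext I hI hIW
      exact ⟨x, hx, by rwa [sum_insert hx]⟩
  have hmaps : ∀ j ∈ range (#W + 1), ∑ i ∈ c j, f i ∈ W := fun j hj =>
    (hc j (by rw [mem_range] at hj; omega)).2
  obtain ⟨a, ha, b, hb, hab, heq⟩ :=
    exists_ne_map_eq_of_card_lt_of_maps_to (by rw [card_range]; omega) hmaps
  wlog hlt : a < b generalizing a b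
  · exact this b hb a ha hab.symm heq.symm (by omega)
  rw [mem_range] at ha hb
  have hsub : c a ⊆ c b := hmono hlt.le
  have hcard : #(c b \ c a) = b - a := by
    rw [card_sdiff_of_subset hsub, (hc a (by omega)).1, (hc b (by omega)).1]
  refine ⟨c b \ c a, card_pos.mp (by omega), by omega, ?_⟩
  rw [sum_sdiff_eq_sub hsub, heq, sub_self]

theorem exists_nonempty_sum_eq_zero_of_card_le [Fintype G]
    (h : Fintype.card G ≤ Fintype.card ι) (f : ι → G) :
    ∃ I : Finset ι, I.Nonempty ∧ ∑ i ∈ I, f i = 0 := by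
  obtain ⟨I, hI, -, hsum⟩ := exists_nonempty_sum_eq_zero_of_forall_extend (f := f) (mem_univ 0)
    (fun I hI _ => by simpa [eq_univ_iff_forall] using hI) (by rwa [card_univ])
  exact ⟨I, hI, hsum⟩

/- Extending by a nonnegative or nonpositive term, against the sign of the current partial sum,
keeps all partial sums between the least and the greatest value of `f`. -/
theorem exists_nonempty_card_lt_sum_eq_zero {f : ι → ℤ} {R : ℕ} (hsum : ∑ i, f i = 0)
    (hf : ∀ i j, f i - f j ≤ R) (hR : R + 1 < Fintype.card ι) :
    ∃ I : Finset ι, I.Nonempty ∧ #I < Fintype.card ι ∧ ∑ i ∈ I, f i = 0 := by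
  classical
  have : Nonempty ι := Fintype.card_pos_iff.mp (by omega)
  obtain ⟨a, ha⟩ := Finite.exists_min f
  obtain ⟨b, hb⟩ := Finite.exists_max f
  have hcard : #(Icc (f a) (f b)) ≤ R + 1 := by
    rw [Int.card_Icc]
    have := hf b a
    omega
  have exists_nonpos (I : Finset ι) (hI : I.Nonempty) (h : ∑ i ∈ I, f i ≤ 0) : ∃ x ∈ I, f x ≤ 0 :=
    exists_le_of_sum_le (g := fun _ => 0) hI (by simpa using h)
  have exists_nonneg (I : Finset ι) (hI : I.Nonempty) (h : 0 ≤ ∑ i ∈ I, f i) : ∃ x ∈ I, 0 ≤ f x :=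
    exists_le_of_sum_le (f := fun _ => 0) hI (by simpa using h)
  have h0 : (0 : ℤ) ∈ Icc (f a) (f b) := by
    obtain ⟨x, -, hx⟩ := exists_nonpos univ univ_nonempty hsum.le
    obtain ⟨y, -, hy⟩ := exists_nonneg univ univ_nonempty hsum.ge
    exact mem_Icc.mpr ⟨(ha x).trans hx, hy.trans (hb y)⟩
  obtain ⟨I, hI, hIcard, hI0⟩ := exists_nonempty_sum_eq_zero_of_forall_extend (f := f) h0
    (fun I hI hIW => by
      rw [mem_Icc] at hIW
      have hcompl : Iᶜ.Nonempty := by rwa [nonempty_iff_ne_empty, Ne, compl_eq_empty_iff]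
      have hsplit : ∑ i ∈ I, f i + ∑ i ∈ Iᶜ, f i = 0 := by rw [sum_add_sum_compl, hsum]
      rcases le_total (∑ i ∈ I, f i) 0 with hle | hge
      · obtain ⟨x, hx, hx0⟩ := exists_nonneg Iᶜ hcompl (by omega)
        exact ⟨x, mem_compl.mp hx, mem_Icc.mpr ⟨by omega, by linarith [hb x]⟩⟩
      · obtain ⟨x, hx, hx0⟩ := exists_nonpos Iᶜ hcompl (by omega)
        exact ⟨x, mem_compl.mp hx, mem_Icc.mpr ⟨by linarith [ha x], by omega⟩⟩)
    (by omega)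
  exact ⟨I, hI, by omega, hI0⟩

end ZeroSum

section Factorization

variable {m : ℕ} {g a b z z' : Fin m → ℕ} {N : ℕ}

theorem vlen_eq_dotProduct_one (z : Fin m → ℕ) : vlen z = z ⬝ᵥ 1 :=
  (dotProduct_one z).symm

@[simp]
theorem vlen_add (z w : Fin m → ℕ) : vlen (z + w) = vlen z + vlen w := by
  simp [vlen_eq_dotProduct_one, add_dotProduct]

@[simp]
theorem vlen_single (i : Fin m) (t : ℕ) : vlen (Pi.single i t : Fin m → ℕ) = t := by
  simp [vlen_eq_dotProduct_one]

theorem fdist_comm (a b : Fin m → ℕ) : fdist a b = fdist b a := by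
  simp only [fdist, max_comm, min_comm]

theorem fdist_le_iff :
    fdist a b ≤ N ↔ ∃ w p q, a = w + p ∧ b = w + q ∧ vlen p ≤ N ∧ vlen q ≤ N := by
  constructor
  · intro h
    refine ⟨a ⊓ b, a - a ⊓ b, b - a ⊓ b, (add_tsub_cancel_of_le inf_le_left).symm,
      (add_tsub_cancel_of_le inf_le_right).symm, (le_max_left _ _).trans h,
      (le_max_right _ _).trans h⟩
  · rintro ⟨w, p, q, rfl, rfl, hp, hq⟩
    exact max_le ((sum_le_sum fun i _ => by simp only [Pi.add_apply]; omega).trans hp)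
      ((sum_le_sum fun i _ => by simp only [Pi.add_apply]; omega).trans hq)

theorem fdist_add_right_le (a b u : Fin m → ℕ) : fdist (a + u) (b + u) ≤ fdist a b := by
  obtain ⟨w, p, q, ha, hb, hp, hq⟩ := fdist_le_iff.mp (le_refl (fdist a b))
  exact fdist_le_iff.mpr ⟨w + u, p, q, by rw [add_right_comm, ← ha],
    by rw [add_right_comm, ← hb], hp, hq⟩

theorem sum_single_dotProduct {ι : Type*} (I : Finset ι) (f : ι → Fin m) (g : Fin m → ℕ) :
    (∑ j ∈ I, Pi.single (f j) 1) ⬝ᵥ g = ∑ j ∈ I, g (f j) := by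
  simp [sum_dotProduct]

theorem vlen_sum_single {ι : Type*} (I : Finset ι) (f : ι → Fin m) :
    vlen (∑ j ∈ I, Pi.single (f j) 1) = #I := by
  simp [vlen_eq_dotProduct_one, sum_single_dotProduct]

theorem exists_monotone_comp_sum_single_eq {L : ℕ} (g : Fin m → ℕ) (hL : vlen z = L) :
    ∃ f : Fin L → Fin m, Monotone (g ∘ f) ∧ ∑ j, Pi.single (f j) 1 = z := by
  let e : Fin L ≃ Σ i, Fin (z i) := (Fintype.equivFinOfCardEq (by simp [← hL, vlen])).symm
  let σ := Tuple.sort fun j => g (e j).1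
  refine ⟨fun j => (e (σ j)).1, Tuple.monotone_sort fun j => g (e j).1, ?_⟩
  calc ∑ j, Pi.single (e (σ j)).1 1
      = ∑ x : Σ i, Fin (z i), Pi.single x.1 1 :=
        (σ.trans e).sum_comp fun x => (Pi.single x.1 1 : Fin m → ℕ)
    _ = ∑ i, Pi.single i (z i) := by
        simp [Fintype.sum_sigma, ← Pi.single_smul]
    _ = z := univ_sum_single z

theorem exists_le_dvd_dotProduct {R : ℕ} (hR : R ≠ 0) (g : Fin m → ℕ) (hz : R ≤ vlen z) :
    ∃ u ≤ z, 0 < vlen u ∧ R ∣ u ⬝ᵥ g := by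
  have : NeZero R := ⟨hR⟩
  obtain ⟨f, -, hf⟩ := exists_monotone_comp_sum_single_eq g (rfl : vlen z = vlen z)
  obtain ⟨I, hI, hsum⟩ := exists_nonempty_sum_eq_zero_of_card_le
    (by rwa [ZMod.card, Fintype.card_fin]) fun j => (g (f j) : ZMod R)
  refine ⟨∑ j ∈ I, Pi.single (f j) 1,
    (sum_le_univ_sum_of_nonneg fun _ => zero_le).trans_eq hf, ?_, ?_⟩
  · rwa [vlen_sum_single, card_pos]
  · rw [sum_single_dotProduct, ← ZMod.natCast_eq_zero_iff]
    exact_mod_cast hsum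

/-- The congruence of homogeneous relations: equal length and equal value under the weights `g`. -/
def homCon (g : Fin m → ℕ) : AddCon (Fin m → ℕ) where
  r z z' := vlen z = vlen z' ∧ z ⬝ᵥ g = z' ⬝ᵥ g
  iseqv := ⟨fun _ => ⟨rfl, rfl⟩, fun h => ⟨h.1.symm, h.2.symm⟩,
    fun h h' => ⟨h.1.trans h'.1, h.2.trans h'.2⟩⟩
  add' h h' := by simp [add_dotProduct, h.1, h.2, h'.1, h'.2]

theorem homCon_iff : homCon g z z' ↔ vlen z = vlen z' ∧ z ⬝ᵥ g = z' ⬝ᵥ g := Iff.rfl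

theorem homCon_add_right_cancel (h : homCon g (z + a) (z' + a)) : homCon g z z' := by
  simpa only [homCon_iff, vlen_add, add_dotProduct, add_left_inj] using h

theorem exists_homCon_add_of_homCon {R : ℕ} (hg : ∀ i j, g i ≤ g j + R) (h : homCon g z z')
    (hR : R + 1 < vlen z) :
    ∃ p q p' q', z = p + q ∧ z' = p' + q' ∧ homCon g p p' ∧ homCon g q q' ∧
      vlen p < vlen z ∧ vlen q < vlen z := by
  obtain ⟨hlen, hval⟩ := homCon_iff.mp h
  obtain ⟨f, hf, hfz⟩ := exists_monotone_comp_sum_single_eq g (rfl : vlen z = vlen z)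
  obtain ⟨f', hf', hfz'⟩ := exists_monotone_comp_sum_single_eq g hlen.symm
  have hsum : ∑ j, (g (f j) - g (f' j) : ℤ) = 0 := by
    rw [← hfz, ← hfz', sum_single_dotProduct, sum_single_dotProduct] at hval
    rw [sum_sub_distrib, sub_eq_zero]
    exact_mod_cast hval
  have hdiff (i j) : (g (f i) - g (f' i) : ℤ) - (g (f j) - g (f' j)) ≤ R := by
    rcases le_total i j with hij | hij
    · have := hf hij
      have := hg (f' j) (f' i)
      simp only [Function.comp_apply] at *
      omega
    · have := hf' hij
      have := hg (f i) (f j)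
      simp only [Function.comp_apply] at *
      omega
  obtain ⟨I, hI, hcard, hI0⟩ := exists_nonempty_card_lt_sum_eq_zero hsum hdiff (by simpa)
  have hIc0 : ∑ j ∈ Iᶜ, (g (f j) - g (f' j) : ℤ) = 0 := by
    rw [← sum_add_sum_compl I, hI0, zero_add] at hsum
    exact hsum
  have homCon_of_sum (J : Finset (Fin (vlen z))) (hJ : ∑ j ∈ J, (g (f j) - g (f' j) : ℤ) = 0) :
      homCon g (∑ j ∈ J, Pi.single (f j) 1) (∑ j ∈ J, Pi.single (f' j) 1) := by
    rw [homCon_iff, vlen_sum_single, vlen_sum_single, sum_single_dotProduct, sum_single_dotProduct]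
    rw [sum_sub_distrib, sub_eq_zero] at hJ
    exact ⟨rfl, by exact_mod_cast hJ⟩
  refine ⟨_, _, _, _, ?_, ?_, homCon_of_sum I hI0, homCon_of_sum Iᶜ hIc0, ?_, ?_⟩
  · rw [sum_add_sum_compl, hfz]
  · rw [sum_add_sum_compl, hfz']
  · simpa [vlen_sum_single] using hcard
  · have := card_pos.mpr hI
    rw [vlen_sum_single, card_compl, Fintype.card_fin]
    omega

/-- `z` and `z'` are joined by an `N`-chain of factorizations over the generators `g`. -/
def ChainConn (g : Fin m → ℕ) (N : ℕ) : (Fin m → ℕ) → (Fin m → ℕ) → Prop :=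
  Relation.ReflTransGen fun a b => a ⬝ᵥ g = b ⬝ᵥ g ∧ fdist a b ≤ N

/-- `N` bounds from above the catenary degree of the monoid generated by `g`. -/
def ChainConnected (g : Fin m → ℕ) (N : ℕ) : Prop :=
  ∀ z z', z ⬝ᵥ g = z' ⬝ᵥ g → ChainConn g N z z'

/-- The catenary degree of the monoid generated by `g`. Like every `sInf` of an empty set it is `0`
when no chain length suffices. -/
noncomputable def catenaryDegree (g : Fin m → ℕ) : ℕ := sInf {N | ChainConnected g N}

namespace ChainConn

theorem symm (h : ChainConn g N z z') : ChainConn g N z' z := by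
  have : Std.Symm fun a b : Fin m → ℕ => a ⬝ᵥ g = b ⬝ᵥ g ∧ fdist a b ≤ N :=
    ⟨fun a b hab => ⟨hab.1.symm, fdist_comm b a ▸ hab.2⟩⟩
  exact symm_of (Relation.ReflTransGen _) h

theorem trans (h : ChainConn g N a b) (h' : ChainConn g N b z) : ChainConn g N a z :=
  Relation.ReflTransGen.trans h h'

theorem add_right (h : ChainConn g N z z') (u : Fin m → ℕ) : ChainConn g N (z + u) (z' + u) :=
  Relation.ReflTransGen.lift (· + u) (fun a b hab =>
    ⟨by simp only [add_dotProduct, hab.1], (fdist_add_right_le a b u).trans hab.2⟩) z z' h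

theorem add_left (h : ChainConn g N z z') (u : Fin m → ℕ) : ChainConn g N (u + z) (u + z') := by
  simpa only [add_comm u] using h.add_right u

theorem of_vlen_le (h : z ⬝ᵥ g = z' ⬝ᵥ g) (hz : vlen z ≤ N) (hz' : vlen z' ≤ N) :
    ChainConn g N z z' :=
  Relation.ReflTransGen.single
    ⟨h, fdist_le_iff.mpr ⟨0, z, z', (zero_add z).symm, (zero_add z').symm, hz, hz'⟩⟩

theorem of_homCon {R : ℕ} (hg : ∀ i j, g i ≤ g j + R) (hR : R < N) (h : homCon g z z') :
    ChainConn g N z z' := by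
  induction hL : vlen z using Nat.strong_induction_on generalizing z z' with
  | _ L ih =>
    rcases le_or_gt (vlen z) (R + 1) with hshort | hlong
    · exact of_vlen_le h.2 (by omega) (by have := h.1; omega)
    · obtain ⟨p, q, p', q', rfl, rfl, hp, hq, hpL, hqL⟩ :=
        exists_homCon_add_of_homCon hg h hlong
      exact ((ih _ (hL ▸ hpL) hp rfl).add_right q).trans ((ih _ (hL ▸ hqL) hq rfl).add_left p')

theorem exists_fdist_le_of_vlen_ne (h : ChainConn g N z z') (hne : vlen z ≠ vlen z') :
    ∃ a b, vlen a = vlen z ∧ vlen b ≠ vlen z ∧ a ⬝ᵥ g = z ⬝ᵥ g ∧ b ⬝ᵥ g = z ⬝ᵥ g ∧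
      fdist a b ≤ N := by
  induction h using Relation.ReflTransGen.head_induction_on with
  | refl => exact absurd rfl hne
  | @head a c hac _ ih =>
    rcases eq_or_ne (vlen c) (vlen a) with hca | hca
    · rw [← hca, hac.1]
      exact ih (hca ▸ hne)
    · exact ⟨a, c, rfl, hca, rfl, hac.1.symm, hac.2⟩

theorem dotProduct_eq (h : ChainConn g N z z') : z ⬝ᵥ g = z' ⬝ᵥ g := by
  induction h with
  | refl => rfl
  | tail _ hstep ih => exact ih.trans hstep.1

theorem iff_exists_fin :
    ChainConn g N z z' ↔ ∃ (L : ℕ) (a : Fin (L + 1) → Fin m → ℕ),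
      a 0 = z ∧ a (Fin.last L) = z' ∧ (∀ i, a i ⬝ᵥ g = z ⬝ᵥ g) ∧
      ∀ i : Fin L, fdist (a i.castSucc) (a i.succ) ≤ N := by
  let r : SetRel (Fin m → ℕ) (Fin m → ℕ) := {p | p.1 ⬝ᵥ g = p.2 ⬝ᵥ g ∧ fdist p.1 p.2 ≤ N}
  constructor
  · intro h
    obtain ⟨p, rfl, rfl⟩ := exists_relSeries_of_reflTransGen (r := r) h
    exact ⟨p.length, p, rfl, rfl, fun i => (dotProduct_eq (reflTransGen_relSeries p i)).symm,
      fun i => (p.step i).2⟩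
  · rintro ⟨L, a, rfl, rfl, hval, hdist⟩
    exact reflTransGen_relSeries (r := r)
      ⟨L, a, fun i => ⟨(hval _).trans (hval _).symm, hdist i⟩⟩ (Fin.last L)

end ChainConn

/-- Up to homogeneous relations, `z` and `z'` are at distance at most `N`. -/
def IsLinked (g : Fin m → ℕ) (N : ℕ) (z z' : Fin m → ℕ) : Prop :=
  ∃ a b, homCon g z a ∧ homCon g z' b ∧ fdist a b ≤ N

theorem isLinked_iff :
    IsLinked g N z z' ↔
      ∃ w p q, homCon g z (w + p) ∧ homCon g z' (w + q) ∧ vlen p ≤ N ∧ vlen q ≤ N := by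
  constructor
  · rintro ⟨a, b, ha, hb, hab⟩
    obtain ⟨w, p, q, rfl, rfl, hp, hq⟩ := fdist_le_iff.mp hab
    exact ⟨w, p, q, ha, hb, hp, hq⟩
  · rintro ⟨w, p, q, hp, hq, hpN, hqN⟩
    exact ⟨_, _, hp, hq, fdist_le_iff.mpr ⟨w, p, q, rfl, rfl, hpN, hqN⟩⟩

theorem IsLinked.congr (hz : homCon g z a) (hz' : homCon g z' b) (h : IsLinked g N a b) :
    IsLinked g N z z' := by
  obtain ⟨c, e, hc, he, hce⟩ := h
  exact ⟨c, e, (homCon g).trans hz hc, (homCon g).trans hz' he, hce⟩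

end Factorization

/-- The shifts of a family of monoids `M_n = ⟨n + shift i : i⟩`: they range from `0`, attained at
the index `bot`, to the positive number `width`, attained at the index `top`. -/
structure ShiftFamily (m : ℕ) where
  shift : Fin m → ℕ
  width : ℕ
  bot : Fin m
  top : Fin m
  shift_bot : shift bot = 0
  shift_top : shift top = width
  shift_le : ∀ i, shift i ≤ width
  width_pos : 0 < width

namespace ShiftFamily

variable {m : ℕ} (s : ShiftFamily m) {n N l : ℕ} {x x' y y' z z' : Fin m → ℕ}

/-- The reflected family, in which the smallest and the largest generator trade places: statements
about `top` become statements about `bot`. -/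
@[simps]
def reverse : ShiftFamily m where
  shift i := s.width - s.shift i
  width := s.width
  bot := s.top
  top := s.bot
  shift_bot := by rw [s.shift_top, Nat.sub_self]
  shift_top := by rw [s.shift_bot, Nat.sub_zero]
  shift_le _ := Nat.sub_le _ _
  width_pos := s.width_pos

/-- The generators of `M_n`. -/
def gens (n : ℕ) (i : Fin m) : ℕ := n + s.shift i

/-- The part of the value of a factorization that does not depend on `n`. -/
def shiftSum (z : Fin m → ℕ) : ℕ := z ⬝ᵥ s.shift

/-- The greatest common divisor of the shifts. -/
def shiftGcd : ℕ := univ.gcd s.shift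

/-- The least positive difference between the lengths of two factorizations of an element of
`M_n`. It is `shiftGcd` when `M_n` is primitive. -/
def lengthGap (n : ℕ) : ℕ := s.shiftGcd / n.gcd s.shiftGcd

@[simp]
theorem shiftSum_add (z w : Fin m → ℕ) : s.shiftSum (z + w) = s.shiftSum z + s.shiftSum w :=
  add_dotProduct z w s.shift

@[simp]
theorem shiftSum_single (i : Fin m) (t : ℕ) : s.shiftSum (Pi.single i t) = t * s.shift i :=
  single_dotProduct s.shift t i

theorem shiftSum_add_reverse_shiftSum (z : Fin m → ℕ) :
    s.shiftSum z + s.reverse.shiftSum z = s.width * vlen z := by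
  rw [shiftSum, shiftSum, ← dotProduct_add, vlen_eq_dotProduct_one, ← smul_eq_mul,
    ← dotProduct_smul]
  congr 1
  funext i
  simp [Nat.add_sub_cancel' (s.shift_le i)]

theorem shiftSum_le (z : Fin m → ℕ) : s.shiftSum z ≤ s.width * vlen z :=
  (Nat.le_add_right _ _).trans_eq (s.shiftSum_add_reverse_shiftSum z)

theorem dotProduct_gens (n : ℕ) (z : Fin m → ℕ) :
    z ⬝ᵥ s.gens n = n * vlen z + s.shiftSum z := by
  rw [shiftSum, vlen_eq_dotProduct_one, ← smul_eq_mul, ← dotProduct_smul, ← dotProduct_add]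
  congr 1
  funext i
  simp [gens]

variable {s}

theorem homCon_gens_iff : homCon (s.gens n) z z' ↔ homCon s.shift z z' := by
  simp only [homCon_iff, dotProduct_gens]
  refine and_congr_right fun h => ?_
  rw [h, add_right_inj, shiftSum, shiftSum]

theorem homCon_reverse_iff : homCon s.reverse.shift z z' ↔ homCon s.shift z z' := by
  simp only [homCon_iff]
  refine and_congr_right fun h => ?_
  have hz := s.shiftSum_add_reverse_shiftSum z
  have hz' := s.shiftSum_add_reverse_shiftSum z'
  rw [h] at hz
  simp only [shiftSum] at hz hz'
  omega

theorem homCon_shift_iff :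
    homCon s.shift z z' ↔ vlen z = vlen z' ∧ s.shiftSum z = s.shiftSum z' := Iff.rfl

section Reduction

/- A subfactorization whose shift sum is divisible by `width` may be traded for copies of the
extreme generators, and one exists as long as `width ≤ vlen z`. -/
theorem exists_homCon_add_single_bot_add_single_top (z : Fin m → ℕ) :
    ∃ (v : Fin m → ℕ) (a b : ℕ), vlen v < s.width ∧
      homCon s.shift z (v + Pi.single s.bot a + Pi.single s.top b) := by
  induction hL : vlen z using Nat.strong_induction_on generalizing z with
  | _ L ih =>
    rcases lt_or_ge L s.width with hlt | hge
    · exact ⟨z, 0, 0, by omega, by simpa using (homCon s.shift).refl z⟩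
    · obtain ⟨u, huz, hpos, t, ht⟩ :=
        exists_le_dvd_dotProduct s.width_pos.ne' s.shift (hL ▸ hge)
      obtain ⟨z, rfl⟩ := exists_add_of_le huz
      have hlen := vlen_add u z
      obtain ⟨v, a, b, hv, hz⟩ := ih (vlen z) (by omega) z rfl
      have htu : t ≤ vlen u :=
        Nat.le_of_mul_le_mul_left (ht ▸ s.shiftSum_le u) s.width_pos
      have hu : homCon s.shift u (Pi.single s.bot (vlen u - t) + Pi.single s.top t) := by
        rw [homCon_shift_iff]
        simp [s.shift_bot, s.shift_top, Nat.sub_add_cancel htu, shiftSum, ht, mul_comm]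
      refine ⟨v, a + (vlen u - t), b + t, hv, ?_⟩
      convert! (homCon s.shift).add hu hz using 1
      rw [Pi.single_add, Pi.single_add]
      abel

theorem exists_homCon_add_single_top {t : ℕ}
    (h : s.width * s.width + s.width * t ≤ s.shiftSum z + s.width) :
    ∃ z' : Fin m → ℕ, homCon s.shift z (z' + Pi.single s.top t) := by
  obtain ⟨v, a, b, hv, hz⟩ := s.exists_homCon_add_single_bot_add_single_top z
  have htb : t ≤ b := by
    have hsum := (homCon_shift_iff.mp hz).2
    simp only [shiftSum_add, shiftSum_single, s.shift_bot, s.shift_top, mul_zero,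
      add_zero] at hsum
    have hvw : s.width * (vlen v + 1) ≤ s.width * s.width := Nat.mul_le_mul_left _ hv
    have := s.shiftSum_le v
    refine Nat.le_of_mul_le_mul_left ?_ s.width_pos
    rw [mul_comm b] at hsum
    rw [mul_add] at hvw
    omega
  obtain ⟨c, rfl⟩ := exists_add_of_le htb
  refine ⟨v + Pi.single s.bot a + Pi.single s.top c, ?_⟩
  rwa [add_assoc, ← Pi.single_add, add_comm c]

theorem exists_homCon_add_single_bot {t : ℕ}
    (h : s.width * s.width + s.width * t ≤ s.reverse.shiftSum z + s.width) :
    ∃ z' : Fin m → ℕ, homCon s.shift z (z' + Pi.single s.bot t) := by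
  simpa only [homCon_reverse_iff, reverse_top] using s.reverse.exists_homCon_add_single_top h

variable (s) in
theorem shiftGcd_dvd_shiftSum (z : Fin m → ℕ) : s.shiftGcd ∣ s.shiftSum z := by
  rw [shiftSum, dotProduct]
  exact dvd_sum fun i _ => (gcd_dvd (mem_univ i)).mul_left _

theorem exists_shiftSum_modEq {σ : ℕ} (hσ : s.shiftGcd ∣ σ) :
    ∃ v, vlen v < s.width ∧ s.shiftSum v ≡ σ [MOD s.width] := by
  obtain ⟨K, hK⟩ := Nat.exists_mem_closure_of_ge (Set.range s.shift)
  have hgcd : Nat.setGcd (Set.range s.shift) ∣ s.shiftGcd :=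
    dvd_gcd fun i _ => Nat.setGcd_dvd_of_mem ⟨i, rfl⟩
  have hwidth : Nat.setGcd (Set.range s.shift) ∣ s.width :=
    Nat.setGcd_dvd_of_mem ⟨s.top, s.shift_top⟩
  obtain ⟨c, hc⟩ := AddSubmonoid.exists_of_mem_closure_range s.shift _
    (hK (σ + s.width * K) (le_add_left (Nat.le_mul_of_pos_left K s.width_pos))
      ((hgcd.trans hσ).add (hwidth.mul_right K)))
  obtain ⟨v, a, b, hv, hcv⟩ := s.exists_homCon_add_single_bot_add_single_top c
  have hsum : σ + s.width * K = s.shiftSum v + b * s.width := by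
    have := (homCon_shift_iff.mp hcv).2
    simp only [shiftSum_add, shiftSum_single, s.shift_bot, s.shift_top, mul_zero,
      add_zero] at this
    rw [← this, hc]
    rfl
  refine ⟨v, hv, ?_⟩
  calc s.shiftSum v ≡ s.shiftSum v + b * s.width [MOD s.width] := by simp [Nat.ModEq]
    _ ≡ σ [MOD s.width] := by simp [← hsum, Nat.ModEq]

theorem exists_vlen_eq_shiftSum_eq {L σ : ℕ} (hσ : s.shiftGcd ∣ σ) (hlo : s.width * s.width ≤ σ)
    (hhi : σ + s.width * s.width ≤ s.width * L) : ∃ y, vlen y = L ∧ s.shiftSum y = σ := by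
  obtain ⟨v, hv, hmod⟩ := exists_shiftSum_modEq hσ
  have hvw : s.width * (vlen v + 1) ≤ s.width * s.width := Nat.mul_le_mul_left _ hv
  rw [mul_add] at hvw
  have hle := s.shiftSum_le v
  obtain ⟨c, hc⟩ := (Nat.modEq_iff_dvd' (by omega)).mp hmod
  have hcL : vlen v + c ≤ L := by
    refine Nat.le_of_mul_le_mul_left ?_ s.width_pos
    rw [mul_add]
    omega
  refine ⟨v + Pi.single s.top c + Pi.single s.bot (L - (vlen v + c)), ?_, ?_⟩
  · simp only [vlen_add, vlen_single]
    omega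
  · simp only [shiftSum_add, shiftSum_single, s.shift_bot, s.shift_top]
    rw [mul_comm c]
    omega

end Reduction

section LengthGap

theorem shiftGcd_dvd_width : s.shiftGcd ∣ s.width :=
  s.shift_top ▸ gcd_dvd (mem_univ s.top)

theorem shiftGcd_pos : 0 < s.shiftGcd :=
  Nat.pos_of_dvd_of_pos shiftGcd_dvd_width s.width_pos

variable (s n) in
theorem lengthGap_pos : 0 < s.lengthGap n :=
  Nat.div_gcd_pos_of_pos_right n shiftGcd_pos

theorem lengthGap_add_width : s.lengthGap (n + s.width) = s.lengthGap n := by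
  rw [lengthGap, Nat.gcd_add_right_left_of_dvd n shiftGcd_dvd_width, lengthGap]

theorem shiftGcd_dvd_mul_lengthGap : s.shiftGcd ∣ n * s.lengthGap n := by
  rw [lengthGap, ← Nat.mul_div_assoc n (Nat.gcd_dvd_right _ _),
    Nat.mul_div_right_comm (Nat.gcd_dvd_left _ _)]
  exact dvd_mul_left _ _

theorem lengthGap_dvd_of_shiftGcd_dvd (h : s.shiftGcd ∣ n * l) : s.lengthGap n ∣ l := by
  rw [lengthGap, Nat.gcd_comm, ← Nat.modEq_zero_iff_dvd]
  exact Nat.ModEq.cancel_left_div_gcd shiftGcd_pos (by simpa [Nat.modEq_zero_iff_dvd] using h)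

theorem dotProduct_gens_eq_iff (hl : vlen z = vlen z' + l) :
    z ⬝ᵥ s.gens n = z' ⬝ᵥ s.gens n ↔ s.shiftSum z' = n * l + s.shiftSum z := by
  rw [dotProduct_gens, dotProduct_gens, hl, mul_add]
  omega

theorem reverse_shiftSum_eq (h : z ⬝ᵥ s.gens n = z' ⬝ᵥ s.gens n) (hl : vlen z = vlen z' + l) :
    s.reverse.shiftSum z = s.reverse.shiftSum z' + (n + s.width) * l := by
  have hS := (dotProduct_gens_eq_iff hl).mp h
  have hz := s.shiftSum_add_reverse_shiftSum z
  have hz' := s.shiftSum_add_reverse_shiftSum z'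
  rw [hl, mul_add] at hz
  rw [add_mul]
  omega

theorem lengthGap_dvd (h : z ⬝ᵥ s.gens n = z' ⬝ᵥ s.gens n) (hl : vlen z = vlen z' + l) :
    s.lengthGap n ∣ l := by
  have hdvd := s.shiftGcd_dvd_shiftSum z'
  rw [(dotProduct_gens_eq_iff hl).mp h, Nat.dvd_add_left (s.shiftGcd_dvd_shiftSum z)] at hdvd
  exact lengthGap_dvd_of_shiftGcd_dvd hdvd

theorem vlen_add_lengthGap_le (h : z ⬝ᵥ s.gens n = z' ⬝ᵥ s.gens n) (hlt : vlen z' < vlen z) :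
    vlen z' + s.lengthGap n ≤ vlen z := by
  obtain ⟨l, hl⟩ := Nat.exists_eq_add_of_le hlt.le
  have := Nat.le_of_dvd (by omega) (lengthGap_dvd h hl)
  omega

theorem le_shiftSum_of_vlen_lt (h : z ⬝ᵥ s.gens n = z' ⬝ᵥ s.gens n) (hlt : vlen z' < vlen z) :
    n ≤ s.shiftSum z' := by
  obtain ⟨l, hl⟩ := Nat.exists_eq_add_of_le hlt.le
  rw [(dotProduct_gens_eq_iff hl).mp h]
  exact le_add_right (Nat.le_mul_of_pos_right n (by omega))

theorem le_reverse_shiftSum_of_vlen_lt (h : z ⬝ᵥ s.gens n = z' ⬝ᵥ s.gens n)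
    (hlt : vlen z' < vlen z) : n ≤ s.reverse.shiftSum z := by
  obtain ⟨l, hl⟩ := Nat.exists_eq_add_of_le hlt.le
  rw [reverse_shiftSum_eq h hl]
  exact le_add_left ((Nat.le_add_right n s.width).trans (Nat.le_mul_of_pos_right _ (by omega)))

theorem width_lt_vlen_of_vlen_lt (hn : s.width * s.width < n)
    (h : z ⬝ᵥ s.gens n = z' ⬝ᵥ s.gens n) (hlt : vlen z' < vlen z) : s.width < vlen z' :=
  Nat.lt_of_mul_lt_mul_left
    ((hn.trans_le (le_shiftSum_of_vlen_lt h hlt)).trans_le (s.shiftSum_le z'))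

end LengthGap

section CatenaryDegree

/- The element `n * (n + width)` has factorizations of different lengths, and the first step of a
chain that changes the length cancels to a pair of factorizations of lengths above `width`. -/
theorem width_add_lengthGap_lt (hn : s.width * s.width < n) (h : ChainConnected (s.gens n) N) :
    s.width + s.lengthGap n < N := by
  have hval : (Pi.single s.bot (n + s.width) : Fin m → ℕ) ⬝ᵥ s.gens n =
      Pi.single s.top n ⬝ᵥ s.gens n := by
    simp [gens, s.shift_bot, s.shift_top, mul_comm]
  have hwidth := s.width_pos
  obtain ⟨a, b, ha, hb, hav, hbv, hab⟩ :=
    (h _ _ hval).exists_fdist_le_of_vlen_ne (by simp only [vlen_single]; omega)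
  obtain ⟨w, p, q, rfl, rfl, hp, hq⟩ := fdist_le_iff.mp hab
  have hpq : p ⬝ᵥ s.gens n = q ⬝ᵥ s.gens n := by
    have := hav.trans hbv.symm
    rwa [add_dotProduct, add_dotProduct, add_right_inj] at this
  have hne : vlen q ≠ vlen p := by
    rw [← ha, vlen_add, vlen_add] at hb
    omega
  clear hab ha hb hav hbv
  wlog hlt : vlen q < vlen p generalizing p q
  · exact this q p hq hp hpq.symm hne.symm (by omega)
  have := width_lt_vlen_of_vlen_lt hn hpq hlt
  have := vlen_add_lengthGap_le hpq hlt
  omega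

theorem chainConn_of_homCon (hN : s.width < N) (h : homCon s.shift z z') :
    ChainConn (s.gens n) N z z' := by
  refine ChainConn.of_homCon (fun i j => ?_) hN (homCon_gens_iff.mpr h)
  have := s.shift_le i
  simp only [gens]
  omega

theorem chainConn_of_isLinked (hN : s.width < N) (hval : z ⬝ᵥ s.gens n = z' ⬝ᵥ s.gens n)
    (h : IsLinked s.shift N z z') : ChainConn (s.gens n) N z z' := by
  obtain ⟨a, b, ha, hb, hab⟩ := h
  refine ((chainConn_of_homCon hN ha).trans (.single ⟨?_, hab⟩)).trans
    (chainConn_of_homCon hN hb).symm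
  rw [← (homCon_gens_iff.mpr ha).2, hval, (homCon_gens_iff.mpr hb).2]

section Induction

variable {L : ℕ}

theorem chainConn_of_homCon_add_single (hN : s.width < N)
    (ih : ∀ x x', vlen x < L → vlen x' < L → x ⬝ᵥ s.gens n = x' ⬝ᵥ s.gens n →
      ChainConn (s.gens n) N x x')
    (hval : z ⬝ᵥ s.gens n = z' ⬝ᵥ s.gens n) (hL : vlen z ≤ L) (hL' : vlen z' ≤ L) {i : Fin m}
    (hz : homCon s.shift z (x + Pi.single i 1)) (hz' : homCon s.shift z' (x' + Pi.single i 1)) :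
    ChainConn (s.gens n) N z z' := by
  have hlen := hz.1
  have hlen' := hz'.1
  rw [vlen_add, vlen_single] at hlen hlen'
  have hx : x ⬝ᵥ s.gens n = x' ⬝ᵥ s.gens n := by
    rw [(homCon_gens_iff.mpr hz).2, (homCon_gens_iff.mpr hz').2, add_dotProduct,
      add_dotProduct] at hval
    exact Nat.add_right_cancel hval
  exact ((chainConn_of_homCon hN hz).trans
    ((ih x x' (by omega) (by omega) hx).add_right _)).trans (chainConn_of_homCon hN hz').symm

theorem chainConn_of_le_shiftSum (hN : s.width < N)
    (ih : ∀ x x', vlen x < L → vlen x' < L → x ⬝ᵥ s.gens n = x' ⬝ᵥ s.gens n →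
      ChainConn (s.gens n) N x x')
    (hval : z ⬝ᵥ s.gens n = z' ⬝ᵥ s.gens n) (hL : vlen z ≤ L) (hle : vlen z' ≤ vlen z)
    (hS : s.width * s.width ≤ s.shiftSum z) : ChainConn (s.gens n) N z z' := by
  obtain ⟨l, hl⟩ := Nat.exists_eq_add_of_le hle
  have hS' := (dotProduct_gens_eq_iff hl).mp hval
  obtain ⟨x, hx⟩ := s.exists_homCon_add_single_top (z := z) (t := 1) (by omega)
  obtain ⟨x', hx'⟩ := s.exists_homCon_add_single_top (z := z') (t := 1) (by omega)
  exact chainConn_of_homCon_add_single hN ih hval hL (hle.trans hL) hx hx'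

theorem chainConn_of_le_reverse_shiftSum (hN : s.width < N)
    (ih : ∀ x x', vlen x < L → vlen x' < L → x ⬝ᵥ s.gens n = x' ⬝ᵥ s.gens n →
      ChainConn (s.gens n) N x x')
    (hval : z ⬝ᵥ s.gens n = z' ⬝ᵥ s.gens n) (hL : vlen z ≤ L) (hle : vlen z' ≤ vlen z)
    (hT : s.width * s.width ≤ s.reverse.shiftSum z') : ChainConn (s.gens n) N z z' := by
  obtain ⟨l, hl⟩ := Nat.exists_eq_add_of_le hle
  have hT' := reverse_shiftSum_eq hval hl
  obtain ⟨x, hx⟩ := s.exists_homCon_add_single_bot (z := z) (t := 1) (by omega)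
  obtain ⟨x', hx'⟩ := s.exists_homCon_add_single_bot (z := z') (t := 1) (by omega)
  exact chainConn_of_homCon_add_single hN ih hval hL (hle.trans hL) hx hx'

theorem exists_vlen_eq_dotProduct_gens_eq {j : ℕ} (hn : s.width * s.width < n) (hj : 0 < j)
    (hval : z ⬝ᵥ s.gens n = z' ⬝ᵥ s.gens n) (hl : vlen z = vlen z' + j + s.lengthGap n) :
    ∃ y, vlen y = vlen z' + j ∧ z ⬝ᵥ s.gens n = y ⬝ᵥ s.gens n := by
  have hS := (dotProduct_gens_eq_iff (hl.trans (add_assoc _ _ _))).mp hval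
  have hz' := s.shiftSum_add_reverse_shiftSum z'
  have hgap := Nat.le_mul_of_pos_right n (s.lengthGap_pos n)
  have hnj := Nat.le_mul_of_pos_right n hj
  obtain ⟨y, hy, hyS⟩ := s.exists_vlen_eq_shiftSum_eq (L := vlen z' + j)
    (σ := n * s.lengthGap n + s.shiftSum z)
    (shiftGcd_dvd_mul_lengthGap.add (s.shiftGcd_dvd_shiftSum z)) (by omega)
    (by rw [mul_add] at *; omega)
  exact ⟨y, hy, (dotProduct_gens_eq_iff (by omega)).mpr hyS⟩

end Induction

variable (s) in
/-- Two factorizations of an element of `M_n` whose lengths differ by the least possible amount,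
the longer one coming first. -/
def IsGapPair (n : ℕ) (z z' : Fin m → ℕ) : Prop :=
  vlen z = vlen z' + s.lengthGap n ∧ z ⬝ᵥ s.gens n = z' ⬝ᵥ s.gens n

variable (s) in
/-- A gap pair consisting mostly of copies of the smallest, respectively the largest, generator.
Only such pairs can obstruct the connectedness by chains. -/
def IsExtremePair (n : ℕ) (z z' : Fin m → ℕ) : Prop :=
  s.IsGapPair n z z' ∧ s.shiftSum z < s.width * s.width ∧
    s.reverse.shiftSum z' < s.width * s.width

theorem chainConnected_of_forall_isExtremePair (hn : s.width * s.width < n) (hN : s.width < N)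
    (hext : ∀ z z', s.IsExtremePair n z z' → ChainConn (s.gens n) N z z') :
    ChainConnected (s.gens n) N := by
  suffices h : ∀ L z z', vlen z < L → vlen z' < L → z ⬝ᵥ s.gens n = z' ⬝ᵥ s.gens n →
      ChainConn (s.gens n) N z z' from
    fun z z' => h (vlen z + vlen z' + 1) z z' (by omega) (by omega)
  intro L
  induction L with
  | zero => exact fun _ _ h => absurd h (by omega)
  | succ L ih =>
    intro z z' hL hL' hval
    wlog hle : vlen z' ≤ vlen z generalizing z z'
    · exact (this z' z hL' hL hval.symm (by omega)).symm
    have hzL : vlen z ≤ L := Nat.le_of_lt_succ hL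
    rcases hle.eq_or_lt with heq | hlt
    · exact chainConn_of_homCon hN (homCon_gens_iff.mp ⟨heq.symm, hval⟩)
    rcases (vlen_add_lengthGap_le hval hlt).eq_or_lt with hgap | hgap
    · rcases lt_or_ge (s.shiftSum z) (s.width * s.width) with hS | hS
      · rcases lt_or_ge (s.reverse.shiftSum z') (s.width * s.width) with hT | hT
        · exact hext z z' ⟨⟨hgap.symm, hval⟩, hS, hT⟩
        · exact chainConn_of_le_reverse_shiftSum hN ih hval hzL hle hT
      · exact chainConn_of_le_shiftSum hN ih hval hzL hle hS
    · obtain ⟨j, hj, hl⟩ : ∃ j > 0, vlen z = vlen z' + j + s.lengthGap n :=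
        ⟨vlen z - (vlen z' + s.lengthGap n), by omega, by omega⟩
      obtain ⟨y, hy, hzy⟩ := exists_vlen_eq_dotProduct_gens_eq hn hj hval hl
      have hyz' := hzy.symm.trans hval
      have := s.lengthGap_pos n
      have hyS := le_shiftSum_of_vlen_lt hzy (by omega)
      have hyT := le_reverse_shiftSum_of_vlen_lt hyz' (by omega)
      exact (chainConn_of_le_reverse_shiftSum hN ih hzy hzL (by omega) (by omega)).trans
        (chainConn_of_le_shiftSum hN ih hyz' (by omega) (by omega) (by omega))

theorem IsExtremePair.isLinked_of_chainConn (hn : s.width * s.width < n)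
    (h : s.IsExtremePair n z z') (hc : ChainConn (s.gens n) N z z') : IsLinked s.shift N z z' := by
  obtain ⟨⟨hlen, hval⟩, hS, hT⟩ := h
  have := s.lengthGap_pos n
  obtain ⟨a, b, ha, hb, hav, hbv, hab⟩ := hc.exists_fdist_le_of_vlen_ne (by omega)
  have hbz : vlen b < vlen z := by
    by_contra hge
    have := le_shiftSum_of_vlen_lt hbv (by omega)
    omega
  have hbz' : vlen z' ≤ vlen b := by
    by_contra hlt
    have := le_reverse_shiftSum_of_vlen_lt (hval.symm.trans hbv.symm) (by omega)
    omega
  have := vlen_add_lengthGap_le hbv.symm hbz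
  exact ⟨a, b, homCon_gens_iff.mp ⟨ha.symm, hav.symm⟩,
    homCon_gens_iff.mp ⟨by omega, (hbv.trans hval).symm⟩, hab⟩

theorem chainConnected_iff_forall_isExtremePair (hn : s.width * s.width < n) (hN : s.width < N) :
    ChainConnected (s.gens n) N ↔
      ∀ z z', s.IsExtremePair n z z' → IsLinked s.shift N z z' :=
  ⟨fun h z z' hz => hz.isLinked_of_chainConn hn (h z z' hz.1.2),
    fun h => chainConnected_of_forall_isExtremePair hn hN
      fun z z' hz => chainConn_of_isLinked hN hz.1.2 (h z z' hz)⟩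

theorem exists_chainConnected (hn : s.width * s.width < n) : ∃ N, ChainConnected (s.gens n) N := by
  let N := n * s.lengthGap n + 2 * (s.width * s.width) + s.lengthGap n + s.width + 1
  refine ⟨N, (chainConnected_iff_forall_isExtremePair hn (by omega)).mpr ?_⟩
  rintro z z' ⟨⟨hlen, hval⟩, hS, hT⟩
  have hS' := (dotProduct_gens_eq_iff hlen).mp hval
  have hz' := s.shiftSum_add_reverse_shiftSum z'
  have := Nat.le_mul_of_pos_left (vlen z') s.width_pos
  exact isLinked_iff.mpr ⟨0, z, z', by simpa using (homCon s.shift).refl z,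
    by simpa using (homCon s.shift).refl z', by omega, by omega⟩

section Shift

theorem isGapPair_congr (hz : homCon s.shift z x) (hz' : homCon s.shift z' x') :
    s.IsGapPair n z z' ↔ s.IsGapPair n x x' := by
  have hx := homCon_gens_iff (n := n).mpr hz
  have hx' := homCon_gens_iff (n := n).mpr hz'
  rw [IsGapPair, IsGapPair, hx.1, hx.2, hx'.1, hx'.2]

theorem isExtremePair_congr (hz : homCon s.shift z x) (hz' : homCon s.shift z' x') :
    s.IsExtremePair n z z' ↔ s.IsExtremePair n x x' := by
  rw [IsExtremePair, IsExtremePair, isGapPair_congr hz hz', (homCon_shift_iff.mp hz).2,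
    (homCon_shift_iff.mp (homCon_reverse_iff.mpr hz')).2]

theorem isGapPair_add_left_iff (w : Fin m → ℕ) :
    s.IsGapPair n (w + z) (w + z') ↔ s.IsGapPair n z z' := by
  rw [IsGapPair, IsGapPair, vlen_add, vlen_add, add_assoc, add_right_inj, add_dotProduct,
    add_dotProduct, add_right_inj]

theorem isGapPair_add_single_iff :
    s.IsGapPair (n + s.width) (z + Pi.single s.bot (s.lengthGap n))
      (z' + Pi.single s.top (s.lengthGap n)) ↔ s.IsGapPair n z z' := by
  rw [IsGapPair, IsGapPair, lengthGap_add_width, vlen_add, vlen_add, vlen_single, vlen_single,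
    add_left_inj]
  refine and_congr_right fun hl => ?_
  rw [dotProduct_gens_eq_iff hl, dotProduct_gens_eq_iff (l := s.lengthGap n) (by simp [hl])]
  simp only [shiftSum_add, shiftSum_single, s.shift_bot, s.shift_top, add_mul,
    mul_comm s.width]
  omega

theorem isExtremePair_add_single_iff :
    s.IsExtremePair (n + s.width) (z + Pi.single s.bot (s.lengthGap n))
      (z' + Pi.single s.top (s.lengthGap n)) ↔ s.IsExtremePair n z z' := by
  rw [IsExtremePair, IsExtremePair, isGapPair_add_single_iff]
  simp [s.shift_bot, s.shift_top]

theorem IsGapPair.exists_homCon_add_single (hn : s.width * s.width < n)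
    (h : s.IsGapPair (n + s.width) z z') :
    ∃ x x' : Fin m → ℕ, homCon s.shift z (x + Pi.single s.bot (s.lengthGap n)) ∧
      homCon s.shift z' (x' + Pi.single s.top (s.lengthGap n)) := by
  obtain ⟨hlen, hval⟩ := h
  have hS := (dotProduct_gens_eq_iff hlen).mp hval
  have hT := reverse_shiftSum_eq hval hlen
  have := Nat.le_mul_of_pos_right n (s.lengthGap_pos n)
  rw [lengthGap_add_width] at hS hT
  simp only [add_mul] at hS hT
  obtain ⟨x, hx⟩ := s.exists_homCon_add_single_bot (z := z) (t := s.lengthGap n) (by omega)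
  obtain ⟨x', hx'⟩ :=
    s.exists_homCon_add_single_top (z := z') (t := s.lengthGap n) (by omega)
  exact ⟨x, x', hx, hx'⟩

theorem IsGapPair.isLinked_add_single_iff (hn : s.width * s.width < n) (h : s.IsGapPair n z z') :
    IsLinked s.shift (N + s.lengthGap n) (z + Pi.single s.bot (s.lengthGap n))
      (z' + Pi.single s.top (s.lengthGap n)) ↔ IsLinked s.shift N z z' := by
  simp only [isLinked_iff]
  constructor
  · rintro ⟨w, p, q, hp, hq, hpN, hqN⟩
    have hpq : s.IsGapPair (n + s.width) p q :=
      (isGapPair_add_left_iff w).mp ((isGapPair_congr hp hq).mp (isGapPair_add_single_iff.mpr h))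
    obtain ⟨p', q', hp', hq'⟩ := hpq.exists_homCon_add_single hn
    have hpN' := hp'.1
    have hqN' := hq'.1
    rw [vlen_add, vlen_single] at hpN' hqN'
    refine ⟨w, p', q', homCon_add_right_cancel ((homCon _).trans hp ?_),
      homCon_add_right_cancel ((homCon _).trans hq ?_), by omega, by omega⟩
    · simpa only [add_assoc] using (homCon s.shift).add ((homCon s.shift).refl w) hp'
    · simpa only [add_assoc] using (homCon s.shift).add ((homCon s.shift).refl w) hq'
  · rintro ⟨w, p, q, hp, hq, hpN, hqN⟩
    refine ⟨w, p + Pi.single s.bot (s.lengthGap n), q + Pi.single s.top (s.lengthGap n), ?_, ?_,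
      by simpa, by simpa⟩
    · simpa only [add_assoc] using (homCon s.shift).add hp ((homCon s.shift).refl _)
    · simpa only [add_assoc] using (homCon s.shift).add hq ((homCon s.shift).refl _)

theorem chainConnected_gens_add_width_iff (hn : s.width * s.width < n) :
    ChainConnected (s.gens (n + s.width)) (N + s.lengthGap n) ↔ ChainConnected (s.gens n) N := by
  constructor
  · intro h
    have hN := width_add_lengthGap_lt (hn.trans_le (Nat.le_add_right _ _)) h
    rw [lengthGap_add_width] at hN
    rw [chainConnected_iff_forall_isExtremePair (by omega) (by omega)] at h
    rw [chainConnected_iff_forall_isExtremePair hn (by omega)]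
    exact fun z z' hz => (hz.1.isLinked_add_single_iff hn).mp
      (h _ _ (isExtremePair_add_single_iff.mpr hz))
  · intro h
    have hN := width_add_lengthGap_lt hn h
    rw [chainConnected_iff_forall_isExtremePair hn (by omega)] at h
    rw [chainConnected_iff_forall_isExtremePair (by omega) (by omega)]
    intro y y' hy
    obtain ⟨z, z', hz, hz'⟩ := hy.1.exists_homCon_add_single hn
    have hext := isExtremePair_add_single_iff.mp ((isExtremePair_congr hz hz').mp hy)
    exact .congr hz hz' ((hext.1.isLinked_add_single_iff hn).mpr (h z z' hext))

theorem catenaryDegree_gens_add_width (hn : s.width * s.width < n) :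
    catenaryDegree (s.gens (n + s.width)) = catenaryDegree (s.gens n) + s.lengthGap n := by
  have hn' : s.width * s.width < n + s.width := hn.trans_le (Nat.le_add_right _ _)
  have hgap : s.lengthGap n ≤ catenaryDegree (s.gens (n + s.width)) := by
    have hlt := width_add_lengthGap_lt hn' (Nat.sInf_mem (s.exists_chainConnected hn'))
    rw [lengthGap_add_width] at hlt
    exact (Nat.le_add_left _ _).trans hlt.le
  rw [catenaryDegree, ← Nat.sInf_add hgap]
  simp only [chainConnected_gens_add_width_iff hn, catenaryDegree]

end Shift

end CatenaryDegree

variable {k : ℕ} {r : Fin (k + 1) → ℕ}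

/-- The family `M_n = ⟨n, n + r_1, …, n + r_k⟩`, whose shifts are `0, r_1, …, r_k`. -/
@[simps]
def ofShifts (r : Fin (k + 1) → ℕ) (hmax : ∀ i, r i ≤ r (Fin.last k)) (hpos : 0 < r (Fin.last k)) :
    ShiftFamily (k + 2) where
  shift := Fin.cons 0 r
  width := r (Fin.last k)
  bot := 0
  top := Fin.last (k + 1)
  shift_bot := rfl
  shift_top := by rw [← Fin.succ_last, Fin.cons_succ]
  shift_le := Fin.cases (Nat.zero_le _) hmax
  width_pos := hpos

variable {hmax : ∀ i, r i ≤ r (Fin.last k)} {hpos : 0 < r (Fin.last k)}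

theorem shiftGcd_ofShifts : (ofShifts r hmax hpos).shiftGcd = univ.gcd r :=
  eq_of_forall_dvd' fun c => by simp [shiftGcd, Finset.dvd_gcd_iff, Fin.forall_fin_succ]

theorem piM_eq_dotProduct (n : ℕ) (z : Fin (k + 2) → ℕ) :
    piM k n r z = z ⬝ᵥ (ofShifts r hmax hpos).gens n := by
  simp [piM, dotProduct, gens, Fin.sum_univ_succ]

theorem sInf_catSet (n : ℕ) :
    sInf (catSet k n r) = catenaryDegree ((ofShifts r hmax hpos).gens n) := by
  simp only [catSet, catenaryDegree, ChainConnected, ChainConn.iff_exists_fin,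
    piM_eq_dotProduct (hmax := hmax) (hpos := hpos)]

end ShiftFamily

theorem Primitive.coprime {k n : ℕ} {r : Fin (k + 1) → ℕ} (h : Primitive k n r) :
    n.Coprime (univ.gcd r) :=
  Nat.eq_one_of_dvd_one <| h.subst <| Nat.dvd_gcd (Nat.gcd_dvd_left _ _) <| dvd_gcd fun i _ =>
    (Nat.gcd_dvd_left _ _).add ((Nat.gcd_dvd_right _ _).trans (gcd_dvd (mem_univ i)))

theorem stmt14_general (k n : ℕ) (r : Fin (k + 1) → ℕ) (hmax : ∀ i, r i ≤ r (Fin.last k))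
    (hn : r (Fin.last k) ^ 2 < n) :
    sInf (catSet k (n + r (Fin.last k)) r) =
      sInf (catSet k n r) + univ.gcd r / n.gcd (univ.gcd r) := by
  rcases Nat.eq_zero_or_pos (r (Fin.last k)) with hzero | hpos
  · have hr : univ.gcd r = 0 := gcd_eq_zero_iff.mpr fun i _ => Nat.le_zero.mp (hzero ▸ hmax i)
    simp [hzero, hr]
  · let s := ShiftFamily.ofShifts r hmax hpos
    have hshift : catenaryDegree (s.gens (n + s.width)) =
        catenaryDegree (s.gens n) + s.lengthGap n :=
      ShiftFamily.catenaryDegree_gens_add_width (by rwa [← sq])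
    rwa [← ShiftFamily.sInf_catSet, ← ShiftFamily.sInf_catSet, ShiftFamily.lengthGap,
      ShiftFamily.shiftGcd_ofShifts] at hshift

/-- For `n > r_k²` with `M_n` and `M_{n+r_k}` primitive,
`c(M_{n+r_k}) = c(M_n) + d` where `d = gcd(r_1,...,r_k)`. -/
theorem stmt14 (k n : ℕ) (r : Fin (k + 1) → ℕ) (hmono : StrictMono r) (hpos : 0 < r 0)
    (hn : r (Fin.last k) ^ 2 < n)
    (hprim : Primitive k n r) (hprim' : Primitive k (n + r (Fin.last k)) r) :
    sInf (catSet k (n + r (Fin.last k)) r) = sInf (catSet k n r) + Finset.univ.gcd r := by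
  rw [stmt14_general k n r (fun i => hmono.monotone (Fin.le_last i)) hn, hprim.coprime,
    Nat.div_one]
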